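/- arXiv:2603.18955 — 2 statements merged into one kernel-verified Lean document; each statement's English description precedes it below -/
import Mathlib

section
/- There exists a set A ⊆ ℂ that is not Borel measurable such that, for the SCI computational problem with Ω = ℂ, M = {0,1} equipped with the discrete metric, Ξ = 1_A the indicator function of A, and Λ = {id_ℂ}: (1) there is a general algorithm (Γ, ΛΓ) with Γ = Ξ (so SCI_G of the problem equals 0); while (2) for every k ∈ ℕ₀ there is no height-k tower computing Ξ all of whose deepest base maps Γ_{n_k,…,n_1} : ℂ → {0,1} are Borel measurable. -/
/-!
There are at most continuum many Borel subsets of `ℂ` (the Borel σ-algebra is countably generated)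
but `2 ^ 𝔠` subsets, so some `A` is not Borel (`exists_not_measurableSet_complex`). One query of
`id` determines the input, so every map on `ℂ` is a general algorithm for `Λ = {id}`. Pointwise
limits of sequences of Borel maps into `{0,1}` are Borel, so by induction on the height the limit
of a tower with Borel base maps is Borel (`TowerBor.measurable`), which `1_A` is not.
-/

/-- The two-point metric space `{0,1} ⊆ ℝ` (the inherited metric is the discrete metric). -/
abbrev M01 : Type := ({0, 1} : Set ℝ)

/-- The point `1` of `{0,1}`. -/
def m1 : M01 := ⟨1, by simp⟩

/-- A general algorithm: output map plus finite query policy valued in `Λ`. -/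
def IsGenAlg {Ω M : Type*} (Λ : Set (Ω → ℂ)) (Γ : Ω → M) : Prop :=
  ∃ Q : Ω → Finset (Ω → ℂ),
    (∀ A, ↑(Q A) ⊆ Λ) ∧
    (∀ A B, (∀ f ∈ Q A, f B = f A) → Γ B = Γ A) ∧
    (∀ A B, (∀ f ∈ Q A, f B = f A) → Q B = Q A)

/-- Height-`k` towers of general algorithms `ℂ → {0,1}` whose deepest base maps are moreover
Borel measurable; limits are pointwise limits in the (discrete) metric of `{0,1}`. -/
def TowerBor (Λ : Set (ℂ → ℂ)) : ℕ → (ℂ → M01) → Prop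
  | 0, Ξ => IsGenAlg Λ Ξ ∧ Measurable Ξ
  | (k+1), Ξ => ∃ Γ : ℕ → ℂ → M01,
      (∀ n, IsGenAlg Λ (Γ n)) ∧ (∀ n, TowerBor Λ k (Γ n)) ∧
      ∀ z, Filter.Tendsto (fun n => Γ n z) Filter.atTop (nhds (Ξ z))

theorem exists_not_measurableSet_complex : ∃ A : Set ℂ, ¬ MeasurableSet A := by
  by_contra! h
  obtain ⟨b, hb, hgen⟩ := MeasurableSpace.CountablyGenerated.isCountablyGenerated (α := ℂ)
  have hle : Cardinal.mk {t : Set ℂ | MeasurableSet t} ≤ Cardinal.continuum := by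
    rw [hgen]
    exact MeasurableSpace.cardinal_measurableSet_le_continuum
      (hb.le_aleph0.trans Cardinal.aleph0_le_continuum)
  have huniv : {t : Set ℂ | MeasurableSet t} = Set.univ := Set.eq_univ_of_forall h
  rw [huniv, Cardinal.mk_univ, Cardinal.mk_set, Cardinal.mk_complex] at hle
  exact absurd (Cardinal.cantor Cardinal.continuum) hle.not_gt

theorem TowerBor.measurable {Λ : Set (ℂ → ℂ)} :
    ∀ {k : ℕ} {Ξ : ℂ → M01}, TowerBor Λ k Ξ → Measurable Ξ
  | 0, _, h => h.2
  | _ + 1, _, ⟨_, _, hΓ, hlim⟩ =>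
    measurable_of_tendsto_metrizable (fun n => (hΓ n).measurable) (tendsto_pi_nhds.mpr hlim)

theorem isGenAlg_id {M : Type*} (Γ : ℂ → M) : IsGenAlg ({id} : Set (ℂ → ℂ)) Γ :=
  ⟨fun _ => {id}, by simp, fun A B h => congrArg Γ (h id (by simp)), fun _ _ _ => rfl⟩

/-- There is a non-Borel set `A ⊆ ℂ` such that for the SCI problem with `Ω = ℂ`,
`M = {0,1}` discrete, `Ξ = 1_A` and `Λ = {id_ℂ}`: (1) `Ξ` itself is a general algorithm
(hence `SCI_G = 0`), while (2) for no `k` is there a height-`k` tower computing `Ξ` all of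
whose deepest base maps are Borel measurable. -/
theorem stmt7 :
    ∃ (A : Set ℂ) (Ξ : ℂ → M01),
      ¬ MeasurableSet A ∧
      A = Ξ ⁻¹' {m1} ∧
      IsGenAlg ({id} : Set (ℂ → ℂ)) Ξ ∧
      ∀ k : ℕ, ¬ TowerBor ({id} : Set (ℂ → ℂ)) k Ξ := by
  classical
  obtain ⟨A, hA⟩ := exists_not_measurableSet_complex
  let Ξ : ℂ → M01 := fun z => if z ∈ A then m1 else ⟨0, by simp⟩
  have hΞ : A = Ξ ⁻¹' {m1} := by
    ext z
    by_cases hz : z ∈ A <;> simp [Ξ, hz, m1]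
  refine ⟨A, Ξ, hA, hΞ, isGenAlg_id Ξ, fun k hk => hA ?_⟩
  rw [hΞ]
  exact hk.measurable (measurableSet_singleton m1)
end

section
/- Let X := { x ∈ {0,1}^{ℕ×ℕ} : lim_{n→∞} Σ_{m=1}^∞ 2^{-m} x(n,m) exists }, let M = [0,1] with the usual metric, and let Λ = { π_{n,m} : x ↦ x(n,m) | n,m ∈ ℕ } be the coordinate evaluations. Define Γ_n(x) := Σ_{m=1}^∞ 2^{-m} x(n,m), Γ_{n,k}(x) := Σ_{m=1}^k 2^{-m} x(n,m), and Ξ(x) := lim_{n→∞} Γ_n(x). Then: (a) for every (n,k), the pair (Γ_{n,k}, constant query policy {π_{n,1},…,π_{n,k}}) is a general algorithm; (b) for every x ∈ X and every n, lim_{k→∞} Γ_{n,k}(x) = Γ_n(x), and lim_{n→∞} Γ_n(x) = Ξ(x); (c) for every n, Γ_n is not a general algorithm: there is no query policy Λ_{Γ_n} : X → finite subsets of Λ satisfying the general-algorithm axioms for Γ_n. Consequently, Hansen's original height-2 tower definition (which imposes the finite-information requirement only on the deepest estimators) is strictly weaker than the tower definition requiring all levels to be general algorithms. -/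
/-!
Parts (a) and (b) are direct: a partial row sum depends only on the bits it adds up, the row
series is dominated by a geometric series, and `XiH` is chosen as the limit of the row sums.

For (c), run a supposed algorithm for `Γ_n` on the zero matrix. It queries finitely many
coordinates, so by `coordEval_injective` some `π_{n,m}` is not queried. The matrix with a single
`1` at `(n, m)` (`unitPt`) lies in the input class and agrees with zero on every query, yet its
`n`-th row sum is `2^{-(m+1)} ≠ 0`.
-/

open Filter

noncomputable section

/-- The real value of the bit `x n m ∈ {0,1}`. -/
def seqVal (x : ℕ → ℕ → Bool) (n m : ℕ) : ℝ := if x n m then 1 else 0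

/-- The full row sum `Σ_m 2^{-(m+1)} x(n,m)`. -/
def rowSum (x : ℕ → ℕ → Bool) (n : ℕ) : ℝ := ∑' m : ℕ, (2 : ℝ)⁻¹ ^ (m + 1) * seqVal x n m

/-- The partial row sum `Σ_{m<k} 2^{-(m+1)} x(n,m)`. -/
def rowPartial (x : ℕ → ℕ → Bool) (n k : ℕ) : ℝ :=
  ∑ m ∈ Finset.range k, (2 : ℝ)⁻¹ ^ (m + 1) * seqVal x n m

/-- The input class `X`: those `x ∈ {0,1}^{ℕ×ℕ}` for which `lim_n Σ_m 2^{-(m+1)} x(n,m)`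
exists. -/
def Xt : Type := {x : ℕ → ℕ → Bool // ∃ L : ℝ, Tendsto (rowSum x) atTop (nhds L)}

/-- The coordinate evaluation `π_{n,m}(x) = x(n,m)` (as a complex number). -/
def coordEval (n m : ℕ) : Xt → ℂ := fun x => ((seqVal x.1 n m : ℝ) : ℂ)

/-- The evaluation set of all coordinate evaluations. -/
def ΛX : Set (Xt → ℂ) := {g | ∃ n m : ℕ, g = coordEval n m}

/-- The target map `Ξ(x) = lim_n Γ_n(x)`. -/
def XiH (x : Xt) : ℝ := x.2.choose

/-- The matrix whose only nonzero entry is a `1` at position `(n, m)`. -/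
def unitBits (n m : ℕ) : ℕ → ℕ → Bool := fun i j => decide (i = n ∧ j = m)

theorem seqVal_unitBits (n m i j : ℕ) :
    seqVal (unitBits n m) i j = if i = n ∧ j = m then 1 else 0 := by
  simp [seqVal, unitBits]

theorem rowSum_unitBits_self (n m : ℕ) : rowSum (unitBits n m) n = (2 : ℝ)⁻¹ ^ (m + 1) := by
  simp [rowSum, seqVal_unitBits]

theorem rowSum_unitBits_of_ne {n i : ℕ} (m : ℕ) (h : i ≠ n) : rowSum (unitBits n m) i = 0 := by
  simp [rowSum, seqVal_unitBits, h]

/-- `unitBits n m` as an element of the input class: its row sums vanish beyond row `n`. -/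
def unitPt (n m : ℕ) : Xt :=
  ⟨unitBits n m, 0, tendsto_const_nhds.congr' <| by
    filter_upwards [eventually_gt_atTop n] with i hi
    exact (rowSum_unitBits_of_ne m hi.ne').symm⟩

/-- The zero matrix as an element of the input class. -/
def zeroPt : Xt :=
  ⟨fun _ _ => false, 0, by
    have h : rowSum (fun _ _ => false) = fun _ => 0 := by
      funext i
      simp [rowSum, seqVal]
    rw [h]
    exact tendsto_const_nhds⟩

theorem rowSum_zeroPt (n : ℕ) : rowSum zeroPt.1 n = 0 := by
  simp [zeroPt, rowSum, seqVal]

theorem coordEval_unitPt (n m i j : ℕ) :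
    coordEval i j (unitPt n m) = if i = n ∧ j = m then 1 else 0 := by
  simp only [coordEval, unitPt, seqVal_unitBits]
  split_ifs <;> simp

theorem coordEval_zeroPt (i j : ℕ) : coordEval i j zeroPt = 0 := by
  simp [coordEval, zeroPt, seqVal]

/-- Distinct coordinates of a row are distinct functions on the input class. Hence a finite
query set, as a set of functions, contains only finitely many coordinates of the row. -/
theorem coordEval_injective (n : ℕ) : Function.Injective (coordEval n) := by
  intro m m' h
  have h1 := congrFun h (unitPt n m)
  by_contra hne
  simp [coordEval_unitPt, Ne.symm hne] at h1

theorem summable_row (x : ℕ → ℕ → Bool) (n : ℕ) :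
    Summable fun m : ℕ => (2 : ℝ)⁻¹ ^ (m + 1) * seqVal x n m := by
  have hg : Summable fun m : ℕ => (2 : ℝ)⁻¹ ^ (m + 1) :=
    (summable_nat_add_iff 1).2 (summable_geometric_of_lt_one (by norm_num) (by norm_num))
  refine Summable.of_nonneg_of_le (fun m => ?_) (fun m => ?_) hg
  · unfold seqVal
    split_ifs <;> simp
  · unfold seqVal
    split_ifs <;> simp

theorem not_isGenAlg_rowSum (n : ℕ) : ¬ IsGenAlg ΛX (fun x : Xt => rowSum x.1 n) := by
  rintro ⟨Q, hQ, hΓ, -⟩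
  have hfin : {m | coordEval n m ∈ Q zeroPt}.Finite :=
    (Q zeroPt).finite_toSet.preimage (coordEval_injective n).injOn
  obtain ⟨m, hm⟩ := hfin.exists_notMem
  have key : rowSum (unitPt n m).1 n = rowSum zeroPt.1 n := by
    refine hΓ zeroPt (unitPt n m) fun f hf => ?_
    obtain ⟨i, j, rfl⟩ := hQ zeroPt hf
    rw [coordEval_unitPt, coordEval_zeroPt, if_neg]
    rintro ⟨rfl, rfl⟩
    exact hm hf
  rw [rowSum_zeroPt] at key
  have h2 := rowSum_unitBits_self n m
  have h3 : (2 : ℝ)⁻¹ ^ (m + 1) = 0 := h2.symm.trans key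
  exact absurd h3 (by positivity)

/-- Hansen's height-2 tower `Γ_{n,k}(x) = Σ_{m<k} 2^{-(m+1)} x(n,m)`,
`Γ_n(x) = Σ_m 2^{-(m+1)} x(n,m)`, `Ξ(x) = lim_n Γ_n(x)`:
(a) each deepest estimator `Γ_{n,k}` together with the constant query policy
`{π_{n,m} : m < k}` is a general algorithm; (b) the iterated limit equalities
`lim_k Γ_{n,k} = Γ_n` and `lim_n Γ_n = Ξ` hold pointwise; but (c) no intermediate estimator
`Γ_n` is a general algorithm. Hence Hansen's original height-2 definition (finite-information
required only at the deepest level) is strictly weaker than requiring all levels to be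
general algorithms. -/
theorem stmt15 :
    (∀ n k : ℕ, ∃ Q : Finset (Xt → ℂ),
        (Q : Set (Xt → ℂ)) = (fun m => coordEval n m) '' Set.Iio k ∧
        (Q : Set (Xt → ℂ)) ⊆ ΛX ∧
        (∀ x y : Xt, (∀ g ∈ Q, g y = g x) → rowPartial y.1 n k = rowPartial x.1 n k)) ∧
    (∀ (x : Xt) (n : ℕ), Tendsto (fun k => rowPartial x.1 n k) atTop (nhds (rowSum x.1 n))) ∧
    (∀ x : Xt, Tendsto (fun n => rowSum x.1 n) atTop (nhds (XiH x))) ∧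
    (∀ n : ℕ, ¬ IsGenAlg ΛX (fun x : Xt => rowSum x.1 n)) := by
  classical
  refine ⟨fun n k => ?_, fun x n => (summable_row x.1 n).hasSum.tendsto_sum_nat,
    fun x => x.2.choose_spec, not_isGenAlg_rowSum⟩
  refine ⟨(Finset.range k).image (coordEval n), by simp, ?_, fun x y h => ?_⟩
  · intro g hg
    obtain ⟨m, -, rfl⟩ := Finset.mem_image.1 (Finset.mem_coe.1 hg)
    exact ⟨n, m, rfl⟩
  · refine Finset.sum_congr rfl fun m hm => ?_
    have h1 : coordEval n m y = coordEval n m x := h _ (Finset.mem_image_of_mem _ hm)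
    rw [Complex.ofReal_injective h1]

end
end
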